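/- Let K = diag(k₁,k₂,k₃) with k₁ > k₂ > k₃ ≥ 1 and s_K(Q) = vex(KQ − QᵀK). If Q ∈ SO(3) satisfies Q_{ii} ≥ 0 for all i and Q_{ij}Q_{ji} ≤ 0 for all i ≠ j, then s_K(Q)ᵀ s_K(Q) ≥ tr(K − KQ). -/

import Mathlib

open Matrix

def vex (S : Matrix (Fin 3) (Fin 3) ℝ) : Fin 3 → ℝ :=
  ![S 2 1, S 0 2, S 1 0]

/-!
Let `A = KQ`, so that `KQ - QᵀK = A - Aᵀ` and `|vex (A - Aᵀ)|² = tr (AAᵀ) - tr (A²)`. Since the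
rows of `Q` are unit vectors, `tr (AAᵀ) = ∑ kᵢ²`. The off-diagonal terms of
`tr (A²) = ∑ AᵢⱼAⱼᵢ` are nonpositive, so `tr (A²) ≤ ∑ kᵢ²Qᵢᵢ²`. The theorem thus reduces to the
scalar inequalities `kᵢ²(1 - Qᵢᵢ²) ≥ kᵢ(1 - Qᵢᵢ)`, where the left side is `kᵢ(1 + Qᵢᵢ) ≥ 1` times
the right side.
-/

theorem vex_sub_transpose_dotProduct_self (A : Matrix (Fin 3) (Fin 3) ℝ) :
    vex (A - Aᵀ) ⬝ᵥ vex (A - Aᵀ) = (A * Aᵀ).trace - (A * A).trace := by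
  simp only [vex, trace_fin_three, dotProduct, mul_apply, Fin.sum_univ_three, Matrix.sub_apply,
    transpose_apply, cons_val]
  ring

theorem row_dotProduct_self_eq_one {n R : Type*} [Fintype n] [DecidableEq n] [CommRing R]
    {Q : Matrix n n R} (hQ : Qᵀ * Q = 1) (i : n) : Q i ⬝ᵥ Q i = 1 := by
  have hQ' : Q * Qᵀ = 1 := mul_eq_one_comm.1 hQ
  exact (congr_fun₂ hQ' i i).trans (one_apply_eq i)

theorem trace_diagonal_mul_mul_transpose_self {n R : Type*} [Fintype n] [DecidableEq n]
    [CommSemiring R] {k : n → R} {Q : Matrix n n R} (hQ : ∀ i, Q i ⬝ᵥ Q i = 1) :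
    (diagonal k * Q * (diagonal k * Q)ᵀ).trace = ∑ i, k i ^ 2 := by
  refine Finset.sum_congr rfl fun i _ ↦ ?_
  have hrow : (diagonal k * Q) i = k i • Q i := funext fun j ↦ diagonal_mul k Q i j
  calc
    (diagonal k * Q) i ⬝ᵥ (diagonal k * Q) i = k i ^ 2 * (Q i ⬝ᵥ Q i) := by
      rw [hrow, smul_dotProduct, dotProduct_smul, smul_eq_mul, smul_eq_mul, ← mul_assoc, sq]
    _ = k i ^ 2 := by rw [hQ, mul_one]

section OrderedRing

variable {n R : Type*} [Fintype n] [CommRing R] [LinearOrder R] [IsStrictOrderedRing R]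

theorem sub_mul_le_sq_mul_one_sub_sq {k q : R} (hk : 1 ≤ k) (hq₀ : 0 ≤ q) (hq₁ : q ≤ 1) :
    k - k * q ≤ k ^ 2 * (1 - q ^ 2) := by
  have hfactor : 1 ≤ k * (1 + q) :=
    one_le_mul_of_one_le_of_one_le hk (le_add_of_nonneg_right hq₀)
  have hnonneg : 0 ≤ k * (1 - q) := mul_nonneg (zero_le_one.trans hk) (sub_nonneg.2 hq₁)
  calc
    k - k * q = k * (1 - q) := by ring
    _ ≤ k * (1 + q) * (k * (1 - q)) := le_mul_of_one_le_left hnonneg hfactor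
    _ = k ^ 2 * (1 - q ^ 2) := by ring

theorem apply_sq_le_dotProduct_self (v : n → R) (i : n) : v i ^ 2 ≤ v ⬝ᵥ v := by
  rw [sq]
  exact Finset.single_le_sum (f := fun j ↦ v j * v j)
    (fun j _ ↦ mul_self_nonneg (v j)) (Finset.mem_univ i)

theorem trace_mul_self_le_sum_diag_sq {A : Matrix n n R}
    (hA : ∀ i j, i ≠ j → A i j * A j i ≤ 0) : (A * A).trace ≤ ∑ i, A i i ^ 2 := by
  classical
  refine Finset.sum_le_sum fun i _ ↦ ?_
  have hoff : ∑ j ∈ Finset.univ.erase i, A i j * A j i ≤ 0 :=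
    Finset.sum_nonpos fun j hj ↦ hA i j (Finset.ne_of_mem_erase hj).symm
  calc
    ∑ j, A i j * A j i = A i i * A i i + ∑ j ∈ Finset.univ.erase i, A i j * A j i :=
      (Finset.add_sum_erase _ _ (Finset.mem_univ i)).symm
    _ ≤ A i i * A i i := add_le_of_nonpos_right hoff
    _ = A i i ^ 2 := (sq _).symm

variable [DecidableEq n]

theorem trace_diagonal_mul_mul_self_le {k : n → R} (hk : ∀ i, 0 ≤ k i) {Q : Matrix n n R}
    (hoff : ∀ i j, i ≠ j → Q i j * Q j i ≤ 0) :
    (diagonal k * Q * (diagonal k * Q)).trace ≤ ∑ i, (k i * Q i i) ^ 2 := by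
  have hscaled (i j : n) (hij : i ≠ j) : (diagonal k * Q) i j * (diagonal k * Q) j i ≤ 0 := by
    rw [diagonal_mul, diagonal_mul, mul_mul_mul_comm]
    exact mul_nonpos_of_nonneg_of_nonpos (mul_nonneg (hk i) (hk j)) (hoff i j hij)
  simpa only [diagonal_mul] using trace_mul_self_le_sum_diag_sq hscaled

theorem trace_diagonal_sub_diagonal_mul_le {k : n → R} (hk : ∀ i, 1 ≤ k i) {Q : Matrix n n R}
    (hQ : ∀ i, Q i ⬝ᵥ Q i = 1) (hdiag : ∀ i, 0 ≤ Q i i)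
    (hoff : ∀ i j, i ≠ j → Q i j * Q j i ≤ 0) :
    (diagonal k - diagonal k * Q).trace ≤
      (diagonal k * Q * (diagonal k * Q)ᵀ).trace -
        (diagonal k * Q * (diagonal k * Q)).trace := by
  have hle_one (i : n) : Q i i ≤ 1 :=
    (sq_le_one_iff₀ (hdiag i)).1 ((apply_sq_le_dotProduct_self (Q i) i).trans_eq (hQ i))
  calc
    (diagonal k - diagonal k * Q).trace = ∑ i, (k i - k i * Q i i) := by
      simp only [trace, diag_apply, Matrix.sub_apply, diagonal_apply_eq, diagonal_mul]
    _ ≤ ∑ i, k i ^ 2 * (1 - Q i i ^ 2) :=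
      Finset.sum_le_sum fun i _ ↦ sub_mul_le_sq_mul_one_sub_sq (hk i) (hdiag i) (hle_one i)
    _ = ∑ i, k i ^ 2 - ∑ i, (k i * Q i i) ^ 2 := by
      simp only [mul_sub, mul_one, mul_pow, Finset.sum_sub_distrib]
    _ ≤ (diagonal k * Q * (diagonal k * Q)ᵀ).trace -
        (diagonal k * Q * (diagonal k * Q)).trace :=
      sub_le_sub (trace_diagonal_mul_mul_transpose_self hQ).ge
        (trace_diagonal_mul_mul_self_le (fun i ↦ zero_le_one.trans (hk i)) hoff)

end OrderedRing

theorem stmt13_general {k : Fin 3 → ℝ} (hk : ∀ i, 1 ≤ k i) {Q : Matrix (Fin 3) (Fin 3) ℝ}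
    (hQ : ∀ i, Q i ⬝ᵥ Q i = 1) (hdiag : ∀ i, 0 ≤ Q i i)
    (hoff : ∀ i j, i ≠ j → Q i j * Q j i ≤ 0) :
    (diagonal k - diagonal k * Q).trace ≤
      vex (diagonal k * Q - Qᵀ * diagonal k) ⬝ᵥ vex (diagonal k * Q - Qᵀ * diagonal k) := by
  have htranspose : Qᵀ * diagonal k = (diagonal k * Q)ᵀ := by
    rw [transpose_mul, diagonal_transpose]
  rw [htranspose, vex_sub_transpose_dotProduct_self]
  exact trace_diagonal_sub_diagonal_mul_le hk hQ hdiag hoff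

theorem stmt13 (k₁ k₂ k₃ : ℝ) (h12 : k₁ > k₂) (h23 : k₂ > k₃) (h3 : k₃ ≥ 1)
    (Q : Matrix (Fin 3) (Fin 3) ℝ) (hQ : Qᵀ * Q = 1) (hdQ : Q.det = 1)
    (hdiag : ∀ i, 0 ≤ Q i i) (hoff : ∀ i j, i ≠ j → Q i j * Q j i ≤ 0) :
    let K : Matrix (Fin 3) (Fin 3) ℝ := Matrix.diagonal ![k₁, k₂, k₃]
    vex (K * Q - Qᵀ * K) ⬝ᵥ vex (K * Q - Qᵀ * K) ≥ (K - K * Q).trace := by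
  have hk (i : Fin 3) : 1 ≤ ![k₁, k₂, k₃] i := by
    fin_cases i
    exacts [show 1 ≤ k₁ by linarith, show 1 ≤ k₂ by linarith, h3]
  exact stmt13_general hk (row_dotProduct_self_eq_one hQ) hdiag hoff
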